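/- Set m := min{m₋,m₊}, m̄ := max{m₋,m₊} and suppose β ≥ 2 c m̄/e. Let E₀ > 0, c* ≥ 0 and R > 0 satisfy e c*/m + √(2E₀/m + (e c*/m)²) = R, let (σ₁^α, σ₂^α) satisfy the cut-off conditions with this E₀, and let φ : [0,∞) → ℝ be continuous with |φ(r)| ≤ c* r for all r ≥ 0. Define f^α(x,v) := σ₁^α(½ m_α |v|² + α e φ(|x|)) σ₂^α(P^α(x,v)). Then for both α ∈ {−1,+1}: f^α(x,v) = 0 whenever |v| > R or |x| > R; f^α ∈ L¹(ℝ²×ℝ²); and the induced density ρ^α(x) := ∫_{ℝ²} f^α(x,v) dv vanishes for |x| > R. -/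

import Mathlib

/-!
The momentum cut-off forces `½|x|² < (c m_α/(eβ)) |x| |v|` on the support of `f^α`, and the largeness
of `β` says precisely that `c m_α/(eβ) ≤ ½`; hence `|x| < |v|` there. The energy cut-off together
with `|φ(r)| ≤ c* r` then gives `½ m |v|² < E₀ + e c* |v|`, and completing the square yields
`|x| < |v| ≤ R` (`ansatz_support`). Since `f^α` is also continuous, it is a continuous function
vanishing outside a compact ball, hence integrable (`ansatz_integrable`), and the density is the
integral of the zero function for `|x| > R`.
-/

open Real MeasureTheory Set Filter

noncomputable section

/-- The rotation `v ↦ v⊥ = (v₂, -v₁)` on `ℝ²`. -/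
def vperp (v : ℝ × ℝ) : ℝ × ℝ := (v.2, -v.1)

/-- The squared Euclidean norm on `ℝ²`. -/
def sqnorm (x : ℝ × ℝ) : ℝ := x.1 ^ 2 + x.2 ^ 2

/-- The Euclidean norm on `ℝ²`. -/
def rnorm (x : ℝ × ℝ) : ℝ := Real.sqrt (x.1 ^ 2 + x.2 ^ 2)

/-- The Euclidean dot product on `ℝ²`. -/
def rdot (x y : ℝ × ℝ) : ℝ := x.1 * y.1 + x.2 * y.2

lemma rnorm_nonneg (x : ℝ × ℝ) : 0 ≤ rnorm x := Real.sqrt_nonneg _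

lemma rnorm_sq (x : ℝ × ℝ) : rnorm x ^ 2 = sqnorm x := Real.sq_sqrt (by positivity)

lemma continuous_rnorm : Continuous rnorm := by
  unfold rnorm; fun_prop

lemma norm_le_rnorm (x : ℝ × ℝ) : ‖x‖ ≤ rnorm x := by
  rw [Prod.norm_def, Real.norm_eq_abs, Real.norm_eq_abs]
  exact max_le (Real.abs_le_sqrt (by nlinarith [sq_nonneg x.2]))
    (Real.abs_le_sqrt (by nlinarith [sq_nonneg x.1]))

/-- Cauchy–Schwarz, using `|v⊥| = |v|`. -/
lemma abs_rdot_vperp_le (x v : ℝ × ℝ) : |rdot x (vperp v)| ≤ rnorm x * rnorm v := by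
  apply abs_le_of_sq_le_sq _ (mul_nonneg (rnorm_nonneg x) (rnorm_nonneg v))
  rw [mul_pow, rnorm_sq, rnorm_sq]
  simp only [rdot, vperp, sqnorm]
  nlinarith [sq_nonneg (x.1 * v.1 + x.2 * v.2)]

/-- The region where energy is below `E₀` and canonical momentum is negative lies in
`{|v| ≤ R, |x| ≤ R}`. Here `s` is the sign of the charge, `μ` the mass of the species and `k ≤ μ`
the smaller of the two masses. -/
lemma phase_region_bound {e c β μ k E₀ cstar R s : ℝ} (he : 0 < e) (hc : 0 < c) (hβ : 0 < β)
    (hk : 0 < k) (hkμ : k ≤ μ) (hcstar : 0 ≤ cstar) (hs : |s| = 1)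
    (hβbig : 2 * c * μ / e ≤ β)
    (hCER : e * cstar / k + Real.sqrt (2 * E₀ / k + (e * cstar / k) ^ 2) = R)
    {φ : ℝ → ℝ} (hφbound : ∀ r : ℝ, 0 ≤ r → |φ r| ≤ cstar * r) (x v : ℝ × ℝ)
    (hE : (1/2) * μ * sqnorm v + s * e * φ (rnorm x) < E₀)
    (hP : (1/2) * sqnorm x + s * (c * μ / (e * β)) * rdot x (vperp v) < 0) :
    rnorm v ≤ R ∧ rnorm x ≤ R := by
  have hX := rnorm_nonneg x
  have hV := rnorm_nonneg v
  have hμ : 0 < μ := hk.trans_le hkμ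
  have hφ := hφbound _ hX
  have hrd := abs_rdot_vperp_le x v
  rw [← rnorm_sq] at hE hP
  generalize rnorm x = X at *
  generalize rnorm v = V at *
  generalize rdot x (vperp v) = D at *
  have hd0 : 0 ≤ c * μ / (e * β) := by positivity
  have hd : c * μ / (e * β) ≤ 1 / 2 := by
    rw [div_le_iff₀ he] at hβbig
    rw [div_le_iff₀ (by positivity)]
    linarith
  generalize c * μ / (e * β) = d at *
  have hXV : X < V := by
    have h1 : -(s * D) ≤ X * V := by
      have := neg_abs_le (s * D)
      rw [abs_mul, hs, one_mul] at this
      linarith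
    have h2 : d * -(s * D) ≤ 1 / 2 * (X * V) :=
      (mul_le_mul_of_nonneg_left h1 hd0).trans
        (mul_le_mul_of_nonneg_right hd (mul_nonneg hX hV))
    have h3 : X * X < X * V := by nlinarith
    exact lt_of_mul_lt_mul_left h3 hX
  have hVR : V ≤ R := by
    have h1 : -(s * φ X) ≤ cstar * V := by
      have := neg_abs_le (s * φ X)
      rw [abs_mul, hs, one_mul] at this
      have := mul_le_mul_of_nonneg_left hXV.le hcstar
      linarith
    have h2 : e * -(s * φ X) ≤ e * (cstar * V) := mul_le_mul_of_nonneg_left h1 he.le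
    have h3 : k * V ^ 2 ≤ μ * V ^ 2 := mul_le_mul_of_nonneg_right hkμ (sq_nonneg V)
    have h4 : k * V ^ 2 ≤ 2 * E₀ + 2 * (e * cstar) * V := by linarith
    have h5 : V ^ 2 ≤ 2 * E₀ / k + 2 * (e * cstar / k) * V := by
      have : 2 * E₀ / k + 2 * (e * cstar / k) * V = (2 * E₀ + 2 * (e * cstar) * V) / k := by
        ring
      rw [this, le_div_iff₀ hk]
      linarith
    have h6 : V - e * cstar / k ≤ Real.sqrt (2 * E₀ / k + (e * cstar / k) ^ 2) :=
      Real.le_sqrt_of_sq_le (by nlinarith)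
    linarith
  exact ⟨hVR, hXV.le.trans hVR⟩

/-- The ansatz for one species vanishes outside `{|v| ≤ R, |x| ≤ R}`. -/
lemma ansatz_support {e c β μ k E₀ cstar R s : ℝ} (he : 0 < e) (hc : 0 < c) (hβ : 0 < β)
    (hk : 0 < k) (hkμ : k ≤ μ) (hcstar : 0 ≤ cstar) (hs : |s| = 1)
    (hβbig : 2 * c * μ / e ≤ β)
    (hCER : e * cstar / k + Real.sqrt (2 * E₀ / k + (e * cstar / k) ^ 2) = R)
    {σ₁ σ₂ : ℝ → ℝ} (hσ₁ : ∀ η : ℝ, E₀ ≤ η → σ₁ η = 0) (hσ₂ : ∀ p : ℝ, 0 ≤ p → σ₂ p = 0)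
    {φ : ℝ → ℝ} (hφbound : ∀ r : ℝ, 0 ≤ r → |φ r| ≤ cstar * r)
    {f : (ℝ × ℝ) × (ℝ × ℝ) → ℝ}
    (hf : ∀ x v : ℝ × ℝ, f (x, v) = σ₁ ((1/2) * μ * sqnorm v + s * e * φ (rnorm x))
        * σ₂ ((1/2) * sqnorm x + s * (c * μ / (e * β)) * rdot x (vperp v)))
    (x v : ℝ × ℝ) (h : R < rnorm v ∨ R < rnorm x) : f (x, v) = 0 := by
  rw [hf]
  by_contra hne
  obtain ⟨h1, h2⟩ := mul_ne_zero_iff.1 hne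
  have hE := lt_of_not_ge fun h' => h1 (hσ₁ _ h')
  have hP := lt_of_not_ge fun h' => h2 (hσ₂ _ h')
  obtain ⟨hv, hx⟩ := phase_region_bound he hc hβ hk hkμ hcstar hs hβbig hCER hφbound x v hE hP
  rcases h with h | h <;> linarith

lemma ansatz_integrable {μ s e d R : ℝ} {σ₁ σ₂ φ : ℝ → ℝ} (hσ₁ : Continuous σ₁)
    (hσ₂ : Continuous σ₂) (hφ : ContinuousOn φ (Set.Ici 0)) {f : (ℝ × ℝ) × (ℝ × ℝ) → ℝ}
    (hf : ∀ x v : ℝ × ℝ, f (x, v) = σ₁ ((1/2) * μ * sqnorm v + s * e * φ (rnorm x))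
        * σ₂ ((1/2) * sqnorm x + s * d * rdot x (vperp v)))
    (hsupp : ∀ x v : ℝ × ℝ, (R < rnorm v ∨ R < rnorm x) → f (x, v) = 0) :
    MeasureTheory.Integrable f := by
  have hcφ : Continuous fun x : ℝ × ℝ => φ (rnorm x) :=
    hφ.comp_continuous continuous_rnorm rnorm_nonneg
  have hcont : Continuous f := by
    have : f = fun z : (ℝ × ℝ) × (ℝ × ℝ) =>
        σ₁ ((1/2) * μ * sqnorm z.2 + s * e * φ (rnorm z.1))
        * σ₂ ((1/2) * sqnorm z.1 + s * d * rdot z.1 (vperp z.2)) := by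
      ext ⟨x, v⟩
      exact hf x v
    rw [this]
    have hcφ' : Continuous fun z : (ℝ × ℝ) × (ℝ × ℝ) => φ (rnorm z.1) :=
      hcφ.comp continuous_fst
    simp only [sqnorm, rdot, vperp]
    exact (hσ₁.comp ((by fun_prop : Continuous _).add (continuous_const.mul hcφ'))).mul
      (hσ₂.comp (by fun_prop))
  refine hcont.integrable_of_hasCompactSupport
    (HasCompactSupport.intro (isCompact_closedBall 0 R) fun z hz => ?_)
  -- the ambient norm is the sup norm, which is dominated by the Euclidean norms of the components
  rw [mem_closedBall_zero_iff, not_le, Prod.norm_def, lt_max_iff] at hz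
  exact hsupp z.1 z.2 (hz.symm.imp (·.trans_le (norm_le_rnorm _)) (·.trans_le (norm_le_rnorm _)))

/-- if `β ≥ 2cm̄/e`, `e c*/m + √(2E₀/m + (e c*/m)²) = R` and
`|φ(r)| ≤ c* r`, then the ansatz
`f^α(x,v) = σ₁^α(½ m_α |v|² + α e φ(|x|)) σ₂^α(P^α(x,v))` is supported in
`{|x| ≤ R, |v| ≤ R}`, is integrable, and its induced density vanishes for `|x| > R`. -/
theorem stmt10
    (e c β mminus mplus E₀ cstar R : ℝ) (he : 0 < e) (hc : 0 < c) (hβ : 0 < β)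
    (hmm : 0 < mminus) (hmp : 0 < mplus) (hE₀ : 0 < E₀) (hcstar : 0 ≤ cstar) (hR : 0 < R)
    (hβbig : 2 * c * max mminus mplus / e ≤ β)
    (hCER : e * cstar / min mminus mplus
      + Real.sqrt (2 * E₀ / min mminus mplus + (e * cstar / min mminus mplus) ^ 2) = R)
    -- cut-off conditions for σ₁^α
    (σ₁m σ₁p σ₂m σ₂p : ℝ → ℝ)
    (hσ₁mC1 : ContDiff ℝ 1 σ₁m) (hσ₁pC1 : ContDiff ℝ 1 σ₁p)
    (hσ₁mb : ∃ C : ℝ, ∀ η : ℝ, |σ₁m η| ≤ C ∧ |deriv σ₁m η| ≤ C)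
    (hσ₁pb : ∃ C : ℝ, ∀ η : ℝ, |σ₁p η| ≤ C ∧ |deriv σ₁p η| ≤ C)
    (hσ₁mpos : ∀ η : ℝ, 0 ≤ σ₁m η) (hσ₁ppos : ∀ η : ℝ, 0 ≤ σ₁p η)
    (hσ₁mint : MeasureTheory.Integrable σ₁m) (hσ₁pint : MeasureTheory.Integrable σ₁p)
    (hσ₁mvan : ∀ η : ℝ, E₀ ≤ η → σ₁m η = 0) (hσ₁pvan : ∀ η : ℝ, E₀ ≤ η → σ₁p η = 0)
    -- cut-off conditions for σ₂^α
    (hσ₂mC1 : ContDiff ℝ 1 σ₂m) (hσ₂pC1 : ContDiff ℝ 1 σ₂p)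
    (hσ₂mb : ∃ C : ℝ, ∀ p : ℝ, |σ₂m p| ≤ C ∧ |deriv σ₂m p| ≤ C)
    (hσ₂pb : ∃ C : ℝ, ∀ p : ℝ, |σ₂p p| ≤ C ∧ |deriv σ₂p p| ≤ C)
    (hσ₂mpos : ∀ p : ℝ, 0 ≤ σ₂m p) (hσ₂ppos : ∀ p : ℝ, 0 ≤ σ₂p p)
    (hσ₂mvan : ∀ p : ℝ, 0 ≤ p → σ₂m p = 0) (hσ₂pvan : ∀ p : ℝ, 0 ≤ p → σ₂p p = 0)
    -- the potential
    (φ : ℝ → ℝ) (hφcont : ContinuousOn φ (Set.Ici 0))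
    (hφbound : ∀ r : ℝ, 0 ≤ r → |φ r| ≤ cstar * r)
    -- the ansatz
    (fm fp : (ℝ × ℝ) × (ℝ × ℝ) → ℝ)
    (hfm : ∀ x v : ℝ × ℝ, fm (x, v)
      = σ₁m ((1/2) * mminus * sqnorm v + (-1) * e * φ (rnorm x))
        * σ₂m ((1/2) * sqnorm x + (-1) * (c * mminus / (e * β)) * rdot x (vperp v)))
    (hfp : ∀ x v : ℝ × ℝ, fp (x, v)
      = σ₁p ((1/2) * mplus * sqnorm v + 1 * e * φ (rnorm x))
        * σ₂p ((1/2) * sqnorm x + 1 * (c * mplus / (e * β)) * rdot x (vperp v))) :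
    (∀ x v : ℝ × ℝ, (R < rnorm v ∨ R < rnorm x) → fm (x, v) = 0 ∧ fp (x, v) = 0) ∧
    MeasureTheory.Integrable fm ∧ MeasureTheory.Integrable fp ∧
    (∀ x : ℝ × ℝ, R < rnorm x →
      (∫ v : ℝ × ℝ, fm (x, v)) = 0 ∧ (∫ v : ℝ × ℝ, fp (x, v)) = 0) := by
  have hk : 0 < min mminus mplus := lt_min hmm hmp
  have hβm : 2 * c * mminus / e ≤ β := le_trans (by gcongr; exact le_max_left _ _) hβbig
  have hβp : 2 * c * mplus / e ≤ β := le_trans (by gcongr; exact le_max_right _ _) hβbig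
  have hm := ansatz_support he hc hβ hk (min_le_left _ _) hcstar (by simp) hβm hCER
    hσ₁mvan hσ₂mvan hφbound hfm
  have hp := ansatz_support he hc hβ hk (min_le_right _ _) hcstar (by simp) hβp hCER
    hσ₁pvan hσ₂pvan hφbound hfp
  refine ⟨fun x v h => ⟨hm x v h, hp x v h⟩,
    ansatz_integrable hσ₁mC1.continuous hσ₂mC1.continuous hφcont hfm hm,
    ansatz_integrable hσ₁pC1.continuous hσ₂pC1.continuous hφcont hfp hp, fun x hx => ⟨?_, ?_⟩⟩
  · simp [hm x _ (Or.inr hx)]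
  · simp [hp x _ (Or.inr hx)]
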